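/- Let I ⊆ ℝ be a nonempty open interval, n ∈ ℕ, μ a bounded signed Borel measure on [0,1], and λ ∈ [0,1]. Let f : I → ℝ be continuous such that: (a) for every k ∈ {0,…,n−1}, the function μ_k(λ)·f is k-increasing on I; and (b) either (i) f is n-increasing on I, μ_{n−1}^-(τ) ≤ 0 for all τ ∈ [0,λ), and μ_{n−1}^+(τ) ≥ 0 for all τ ∈ (λ,1], or (ii) f is n-decreasing on I, μ_{n−1}^-(τ) ≥ 0 for all τ ∈ [0,λ), and μ_{n−1}^+(τ) ≤ 0 for all τ ∈ (λ,1]. Then ∫_{[0,1]} f((1−t)x + t y) dμ(t) ≥ 0 for all x, y ∈ I with x < y. -/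

import Mathlib

open MeasureTheory Set

/-- Integral of `f` over the set `A` with respect to the (automatically bounded) signed
Borel measure `μ`, defined via the Jordan decomposition. -/
noncomputable def sInt (μ : MeasureTheory.SignedMeasure ℝ) (A : Set ℝ) (f : ℝ → ℝ) : ℝ :=
  (∫ t in A, f t ∂μ.toJordanDecomposition.posPart) -
  (∫ t in A, f t ∂μ.toJordanDecomposition.negPart)

/-- `μ_k(τ) = ∫_{[0,1]} (t-τ)^k dμ(t)` (with the convention `0^0 = 1`). -/
noncomputable def muK (μ : MeasureTheory.SignedMeasure ℝ) (k : ℕ) (τ : ℝ) : ℝ :=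
  sInt μ (Icc 0 1) (fun t => (t - τ) ^ k)

/-- `μ_k^-(τ) = ∫_{[0,τ)} (t-τ)^k dμ(t)`. -/
noncomputable def muMinus (μ : MeasureTheory.SignedMeasure ℝ) (k : ℕ) (τ : ℝ) : ℝ :=
  sInt μ (Ico 0 τ) (fun t => (t - τ) ^ k)

/-- `μ_k^+(τ) = ∫_{(τ,1]} (t-τ)^k dμ(t)`. -/
noncomputable def muPlus (μ : MeasureTheory.SignedMeasure ℝ) (k : ℕ) (τ : ℝ) : ℝ :=
  sInt μ (Ioc τ 1) (fun t => (t - τ) ^ k)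

/-- The `n`th-order divided difference of `f` at the points `x 0, …, x n`. -/
noncomputable def divDiff (f : ℝ → ℝ) (n : ℕ) (x : Fin (n + 1) → ℝ) : ℝ :=
  ∑ j : Fin (n + 1), f (x j) / ∏ i ∈ Finset.univ.erase j, (x j - x i)

/-- `f` is `n`-increasing on `I`: all `n`th-order divided differences at pairwise
distinct points of `I` are nonnegative. -/
def nIncreasingOn (f : ℝ → ℝ) (I : Set ℝ) (n : ℕ) : Prop :=
  ∀ x : Fin (n + 1) → ℝ, Function.Injective x → (∀ j, x j ∈ I) → 0 ≤ divDiff f n x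

/-- `f` is `n`-decreasing on `I` if `-f` is `n`-increasing on `I`. -/
def nDecreasingOn (f : ℝ → ℝ) (I : Set ℝ) (n : ℕ) : Prop :=
  nIncreasingOn (fun u => -f u) I n

/-- `φ⁺_{p,n}(u) = ((u-p)_+)^n` for `n ≥ 1`, and `φ⁺_{p,0}` is the characteristic
function of `(p,∞)`. -/
noncomputable def phiPlus (p : ℝ) (n : ℕ) (u : ℝ) : ℝ :=
  if n = 0 then (if p < u then 1 else 0) else (max 0 (u - p)) ^ n

/-- `φ⁻_{p,n}(u) = ((u-p)_−)^n` for `n ≥ 1`, and `φ⁻_{p,0}` is the characteristic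
function of `(−∞,p)`. -/
noncomputable def phiMinus (p : ℝ) (n : ℕ) (u : ℝ) : ℝ :=
  if n = 0 then (if u < p then 1 else 0) else (max 0 (p - u)) ^ n

/- The set `J(p)` associated with an interval `I` and a point `p ∈ ℝ`:
`(−∞, (p − inf I)/(sup I − inf I))` if `p ≤ inf I` (interpreted as `(−∞,0)` when `I` is
unbounded above), `ℝ` if `p ∈ I`, and `(1 + (p − sup I)/(sup I − inf I), ∞)` if
`p ≥ sup I` (interpreted as `(1,∞)` when `I` is unbounded below). -/
open scoped Classical in
noncomputable def Jset (I : Set ℝ) (p : ℝ) : Set ℝ :=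
  if p ∈ I then Set.univ
  else if p ∈ lowerBounds I then
    (if BddAbove I then Set.Iio ((p - sInf I) / (sSup I - sInf I)) else Set.Iio 0)
  else
    (if BddBelow I then Set.Ioi (1 + (p - sSup I) / (sSup I - sInf I)) else Set.Ioi 1)

/-!
An affine change of variable reduces to `x = 0`, `y = 1`. For smooth `f`, expand `f` at `λ` by
Taylor's formula with integral remainder and integrate against `μ`: the polynomial part
contributes the terms `μ_k(λ) f⁽ᵏ⁾(λ) / k!`, and by Fubini the remainder is `f⁽ⁿ⁾` integrated
against `μ_{n-1}^+` on `(λ, 1]` and against `-μ_{n-1}^-` on `[0, λ)`, up to the factor `1/(n-1)!`.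
Under the hypotheses every one of these contributions is nonnegative, because a smooth
`k`-increasing function has a nonnegative `k`-th derivative. A continuous `f` is approximated
uniformly by its mollifications, which inherit monotonicity of every order: a divided difference
of a mollification is an average of divided differences of `f` at translated points. The case
where `f` is `n`-decreasing is the other one applied to `-μ` and `-f`.
-/

open Metric Function
open scoped ContDiff Convolution

section SignedIntegral

variable {μ : SignedMeasure ℝ} {A : Set ℝ} {f g : ℝ → ℝ}

lemma integrableOn_totalVariation_iff :
    IntegrableOn f A μ.totalVariation ↔
      IntegrableOn f A μ.toJordanDecomposition.posPart ∧
        IntegrableOn f A μ.toJordanDecomposition.negPart :=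
  integrableOn_add_measure

lemma sInt_congr (hA : MeasurableSet A) (h : EqOn f g A) : sInt μ A f = sInt μ A g := by
  simp only [sInt, setIntegral_congr_fun hA h]

lemma sInt_const_mul (c : ℝ) : sInt μ A (fun t => c * f t) = c * sInt μ A f := by
  simp only [sInt, integral_const_mul, mul_sub]

lemma sInt_mul_const (c : ℝ) : sInt μ A (fun t => f t * c) = sInt μ A f * c := by
  simp only [sInt, integral_mul_const, sub_mul]

lemma sInt_neg_measure : sInt (-μ) A f = -sInt μ A f := by
  simp [sInt, SignedMeasure.toJordanDecomposition_neg]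

lemma sInt_neg : sInt μ A (fun t => -f t) = -sInt μ A f := by
  simpa using sInt_const_mul (f := f) (-1)

lemma sInt_add (hf : IntegrableOn f A μ.totalVariation) (hg : IntegrableOn g A μ.totalVariation) :
    sInt μ A (fun t => f t + g t) = sInt μ A f + sInt μ A g := by
  rw [integrableOn_totalVariation_iff] at hf hg
  simp only [sInt, integral_add hf.1 hg.1, integral_add hf.2 hg.2]
  ring

lemma sInt_sub (hf : IntegrableOn f A μ.totalVariation) (hg : IntegrableOn g A μ.totalVariation) :
    sInt μ A (fun t => f t - g t) = sInt μ A f - sInt μ A g := by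
  simp only [sub_eq_add_neg, sInt_add hf hg.fun_neg, sInt_neg]

lemma sInt_finsetSum {ι : Type*} (s : Finset ι) {f : ι → ℝ → ℝ}
    (hf : ∀ i ∈ s, IntegrableOn (f i) A μ.totalVariation) :
    sInt μ A (fun t => ∑ i ∈ s, f i t) = ∑ i ∈ s, sInt μ A (f i) := by
  simp only [sInt, integral_finsetSum s fun i hi => (integrableOn_totalVariation_iff.1 (hf i hi)).1,
    integral_finsetSum s fun i hi => (integrableOn_totalVariation_iff.1 (hf i hi)).2,
    Finset.sum_sub_distrib]

lemma sInt_indicator {B : Set ℝ} (hB : MeasurableSet B) :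
    sInt μ A (B.indicator f) = sInt μ (A ∩ B) f := by
  simp only [sInt, setIntegral_indicator hB]

lemma abs_sInt_le {C : ℝ} (hC : ∀ t ∈ A, |f t| ≤ C) :
    |sInt μ A f| ≤ C * μ.totalVariation.real A :=
  calc |sInt μ A f|
    _ ≤ ‖∫ t in A, f t ∂μ.toJordanDecomposition.posPart‖ +
          ‖∫ t in A, f t ∂μ.toJordanDecomposition.negPart‖ := by
      rw [← Real.norm_eq_abs, sInt]
      exact norm_sub_le _ _
    _ ≤ C * μ.toJordanDecomposition.posPart.real A + C * μ.toJordanDecomposition.negPart.real A :=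
      add_le_add (norm_setIntegral_le_of_norm_le_const (measure_lt_top _ _) hC)
        (norm_setIntegral_le_of_norm_le_const (measure_lt_top _ _) hC)
    _ = C * μ.totalVariation.real A := by
      rw [← mul_add, SignedMeasure.totalVariation, measureReal_add_apply]

lemma sInt_nonneg_of_forall_approx (hf : IntegrableOn f A μ.totalVariation)
    (h : ∀ δ > 0, ∃ g, IntegrableOn g A μ.totalVariation ∧ (∀ t ∈ A, |g t - f t| ≤ δ) ∧
      0 ≤ sInt μ A g) : 0 ≤ sInt μ A f := by
  set V := μ.totalVariation.real A
  have hV : 0 < V + 1 := by positivity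
  refine le_of_forall_pos_le_add fun ε hε => ?_
  obtain ⟨g, hg, hgf, hg0⟩ := h (ε / (V + 1)) (by positivity)
  have hdiff : sInt μ A g - sInt μ A f ≤ ε :=
    calc sInt μ A g - sInt μ A f
      _ = sInt μ A (fun t => g t - f t) := (sInt_sub hg hf).symm
      _ ≤ ε / (V + 1) * V := (le_abs_self _).trans (abs_sInt_le hgf)
      _ ≤ ε / (V + 1) * (V + 1) := by gcongr; linarith
      _ = ε := div_mul_cancel₀ _ hV.ne'
  linarith

lemma sInt_integral_swap {B : Set ℝ} {ν : Measure ℝ} [SFinite ν] {h : ℝ → ℝ → ℝ}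
    (hh : IntegrableOn (uncurry h) (A ×ˢ B) (μ.totalVariation.prod ν)) :
    sInt μ A (fun t => ∫ s in B, h t s ∂ν) = ∫ s in B, sInt μ A (fun t => h t s) ∂ν := by
  rw [SignedMeasure.totalVariation, Measure.add_prod, integrableOn_add_measure, IntegrableOn,
    IntegrableOn, ← Measure.prod_restrict, ← Measure.prod_restrict] at hh
  simp only [sInt]
  exact (congrArg₂ _ (integral_integral_swap hh.1) (integral_integral_swap hh.2)).trans
    (integral_sub hh.1.integral_prod_right hh.2.integral_prod_right).symm

lemma setIntegral_inter_eq_indicator (B : Set ℝ) {S : Set (ℝ × ℝ)} (hS : MeasurableSet S)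
    (H : ℝ × ℝ → ℝ) (t : ℝ) :
    ∫ s in B ∩ {s | (t, s) ∈ S}, H (t, s) = ∫ s in B, S.indicator H (t, s) :=
  (setIntegral_indicator (measurable_prodMk_left hS)).symm

lemma integrableOn_setIntegral_section {B : Set ℝ} {S : Set (ℝ × ℝ)} (hS : MeasurableSet S)
    {H : ℝ × ℝ → ℝ} (hH : IntegrableOn H (A ×ˢ B) (μ.totalVariation.prod volume)) :
    IntegrableOn (fun t => ∫ s in B ∩ {s | (t, s) ∈ S}, H (t, s)) A μ.totalVariation := by
  rw [IntegrableOn, ← Measure.prod_restrict] at hH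
  simp only [setIntegral_inter_eq_indicator B hS]
  exact (hH.indicator hS).integral_prod_left

lemma sInt_setIntegral_section_swap {B : Set ℝ} {S : Set (ℝ × ℝ)} (hS : MeasurableSet S)
    {H : ℝ × ℝ → ℝ} (hH : IntegrableOn H (A ×ˢ B) (μ.totalVariation.prod volume)) :
    sInt μ A (fun t => ∫ s in B ∩ {s | (t, s) ∈ S}, H (t, s)) =
      ∫ s in B, sInt μ (A ∩ {t | (t, s) ∈ S}) (fun t => H (t, s)) := by
  simp only [setIntegral_inter_eq_indicator B hS]
  exact (sInt_integral_swap (h := fun t s => S.indicator H (t, s)) (hH.indicator hS)).trans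
    (integral_congr_ae (.of_forall fun s => sInt_indicator (measurable_prodMk_right hS)))

lemma sInt_intervalIntegral {lam : ℝ} (hlam : lam ∈ Icc (0 : ℝ) 1) {H : ℝ → ℝ → ℝ}
    (hH : Continuous (uncurry H)) :
    sInt μ (Icc 0 1) (fun t => ∫ s in lam..t, H t s) =
      (∫ s in Ioc lam 1, sInt μ (Ioc s 1) (fun t => H t s)) -
        ∫ s in Ico 0 lam, sInt μ (Ico 0 s) (fun t => H t s) := by
  have hint : IntegrableOn (uncurry H) (Icc 0 1 ×ˢ Icc 0 1) (μ.totalVariation.prod volume) :=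
    hH.continuousOn.integrableOn_compact (isCompact_Icc.prod isCompact_Icc)
  have hright := hint.mono_set (prod_mono_right (Ioc_subset_Icc_self.trans
    (Icc_subset_Icc_left hlam.1)) : Icc (0 : ℝ) 1 ×ˢ Ioc lam 1 ⊆ _)
  have hleft := hint.mono_set (prod_mono_right (Ico_subset_Icc_self.trans
    (Icc_subset_Icc_right hlam.2)) : Icc (0 : ℝ) 1 ×ˢ Ico 0 lam ⊆ _)
  have hlt : MeasurableSet {z : ℝ × ℝ | z.1 < z.2} := measurableSet_lt measurable_fst measurable_snd
  have hgt : MeasurableSet {z : ℝ × ℝ | z.2 < z.1} := measurableSet_lt measurable_snd measurable_fst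
  calc sInt μ (Icc 0 1) (fun t => ∫ s in lam..t, H t s)
    _ = sInt μ (Icc 0 1) (fun t => (∫ s in Ioc lam 1 ∩ {s | s < t}, H t s) -
          ∫ s in Ico 0 lam ∩ {s | t < s}, H t s) := by
      refine sInt_congr measurableSet_Icc fun t ht => ?_
      have hIoo₁ : Ioc lam 1 ∩ {s | s < t} = Ioo lam t := by grind
      have hIoo₂ : Ico 0 lam ∩ {s | t < s} = Ioo t lam := by grind
      simp only [hIoo₁, hIoo₂, intervalIntegral, integral_Ioc_eq_integral_Ioo]
    _ = (∫ s in Ioc lam 1, sInt μ (Icc 0 1 ∩ {t | s < t}) (fun t => H t s)) -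
          ∫ s in Ico 0 lam, sInt μ (Icc 0 1 ∩ {t | t < s}) (fun t => H t s) := by
      exact (sInt_sub (integrableOn_setIntegral_section hgt hright)
        (integrableOn_setIntegral_section hlt hleft)).trans
        (congrArg₂ _ (sInt_setIntegral_section_swap hgt hright)
          (sInt_setIntegral_section_swap hlt hleft))
    _ = _ := by
      refine congrArg₂ _ (setIntegral_congr_fun measurableSet_Ioc fun s hs => ?_)
        (setIntegral_congr_fun measurableSet_Ico fun s hs => ?_)
      · have hIoc : Icc 0 1 ∩ {t | s < t} = Ioc s 1 := by grind
        simp only [hIoc]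
      · have hIco : Icc 0 1 ∩ {t | t < s} = Ico 0 s := by grind
        simp only [hIco]

end SignedIntegral

section Taylor

open scoped Nat

variable {m : ℕ} {G : ℝ → ℝ}

lemma taylor_integral_remainder_iteratedDeriv (hG : ContDiff ℝ (m + 1 : ℕ) G) (a t : ℝ) :
    G t = ∑ k ∈ Finset.range (m + 1), iteratedDeriv k G a / k ! * (t - a) ^ k +
      (∫ s in a..t, (t - s) ^ m * iteratedDeriv (m + 1) G s) / m ! := by
  rcases eq_or_ne a t with rfl | hne
  · simp [Finset.sum_range_succ']
  have hu : UniqueDiffOn ℝ (uIcc a t) := uniqueDiffOn_uIcc hne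
  have hsum : taylorWithinEval G m (uIcc a t) a t =
      ∑ k ∈ Finset.range (m + 1), iteratedDeriv k G a / k ! * (t - a) ^ k := by
    rw [taylor_within_apply]
    refine Finset.sum_congr rfl fun k hk => ?_
    have hGk : ContDiff ℝ k G := hG.of_le (by exact_mod_cast (Finset.mem_range.1 hk).le)
    rw [iteratedDerivWithin_eq_iteratedDeriv hu hGk.contDiffAt left_mem_uIcc, smul_eq_mul]
    ring
  have hrem : ∫ s in a..t, ((t - s) ^ m / m !) • iteratedDerivWithin (m + 1) G (uIcc a t) s =
      (∫ s in a..t, (t - s) ^ m * iteratedDeriv (m + 1) G s) / m ! := by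
    rw [← intervalIntegral.integral_div]
    refine intervalIntegral.integral_congr fun s hs => ?_
    simp only [iteratedDerivWithin_eq_iteratedDeriv hu hG.contDiffAt hs, smul_eq_mul]
    ring
  rw [← hsum, ← hrem, ← taylor_integral_remainder hG.contDiffOn, add_sub_cancel]

variable {μ : SignedMeasure ℝ} {lam : ℝ}

theorem sInt_eq_sum_add_integral_muPlus_sub_integral_muMinus (hlam : lam ∈ Icc (0 : ℝ) 1)
    (hG : ContDiff ℝ (m + 1 : ℕ) G) :
    sInt μ (Icc 0 1) G =
      ∑ k ∈ Finset.range (m + 1), iteratedDeriv k G lam / k ! * muK μ k lam +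
        ((∫ s in Ioc lam 1, muPlus μ m s * iteratedDeriv (m + 1) G s) -
          ∫ s in Ico 0 lam, muMinus μ m s * iteratedDeriv (m + 1) G s) / m ! := by
  have hkernel : Continuous (uncurry fun t s => (t - s) ^ m * iteratedDeriv (m + 1) G s) :=
    ((continuous_fst.sub continuous_snd).pow m).mul
      ((hG.continuous_iteratedDeriv _ le_rfl).comp continuous_snd)
  have hpoly : ∀ k ∈ Finset.range (m + 1), IntegrableOn
      (fun t => iteratedDeriv k G lam / k ! * (t - lam) ^ k) (Icc 0 1) μ.totalVariation :=
    fun k _ => ContinuousOn.integrableOn_compact isCompact_Icc (by fun_prop)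
  have hrem : Continuous fun t => ∫ s in lam..t, (t - s) ^ m * iteratedDeriv (m + 1) G s :=
    intervalIntegral.continuous_parametric_intervalIntegral_of_continuous hkernel continuous_id
  have hremInt : IntegrableOn (fun t => (∫ s in lam..t, (t - s) ^ m * iteratedDeriv (m + 1) G s) *
      (m ! : ℝ)⁻¹) (Icc 0 1) μ.totalVariation :=
    (hrem.mul_const _).continuousOn.integrableOn_compact isCompact_Icc
  rw [sInt_congr measurableSet_Icc fun t _ => taylor_integral_remainder_iteratedDeriv hG lam t]
  simp only [div_eq_mul_inv _ (m ! : ℝ)]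
  rw [sInt_add (integrable_finsetSum _ hpoly) hremInt, sInt_finsetSum _ hpoly, sInt_mul_const,
    sInt_intervalIntegral hlam hkernel]
  simp only [sInt_const_mul, sInt_mul_const, muK, muPlus, muMinus]

theorem sInt_nonneg_of_iteratedDeriv (hlam : lam ∈ Icc (0 : ℝ) 1)
    (hG : ContDiff ℝ (m + 1 : ℕ) G)
    (hlow : ∀ k < m + 1, 0 ≤ muK μ k lam * iteratedDeriv k G lam)
    (htop : ∀ t ∈ Icc (0 : ℝ) 1, 0 ≤ iteratedDeriv (m + 1) G t)
    (hminus : ∀ τ ∈ Ico 0 lam, muMinus μ m τ ≤ 0) (hplus : ∀ τ ∈ Ioc lam 1, 0 ≤ muPlus μ m τ) :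
    0 ≤ sInt μ (Icc 0 1) G := by
  have hsum : 0 ≤ ∑ k ∈ Finset.range (m + 1), iteratedDeriv k G lam / k ! * muK μ k lam :=
    Finset.sum_nonneg fun k hk => by
      have := hlow k (Finset.mem_range.1 hk)
      rw [div_mul_eq_mul_div, mul_comm]
      positivity
  have hright : 0 ≤ ∫ s in Ioc lam 1, muPlus μ m s * iteratedDeriv (m + 1) G s :=
    setIntegral_nonneg measurableSet_Ioc fun s hs =>
      mul_nonneg (hplus s hs) (htop s ⟨hlam.1.trans hs.1.le, hs.2⟩)
  have hleft : ∫ s in Ico 0 lam, muMinus μ m s * iteratedDeriv (m + 1) G s ≤ 0 :=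
    setIntegral_nonpos measurableSet_Ico fun s hs =>
      mul_nonpos_of_nonpos_of_nonneg (hminus s hs) (htop s ⟨hs.1, hs.2.le.trans hlam.2⟩)
  rw [sInt_eq_sum_add_integral_muPlus_sub_integral_muMinus hlam hG]
  exact add_nonneg hsum (div_nonneg (sub_nonneg.2 (hleft.trans hright)) (by positivity))

end Taylor

section DividedDifferences

open scoped Nat

variable {n : ℕ} {f g : ℝ → ℝ} {S : Set ℝ}

lemma divDiff_comp_of_sub_eq_mul {c : ℝ} (hg : ∀ s t, g s - g t = c * (s - t)) (hc : c ≠ 0)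
    (z : Fin (n + 1) → ℝ) :
    divDiff (fun t => f (g t)) n z = c ^ n * divDiff f n (fun j => g (z j)) := by
  rw [divDiff, divDiff, Finset.mul_sum]
  refine Finset.sum_congr rfl fun j _ => ?_
  have hcard : (Finset.univ.erase j).card = n := by simp
  have hcn : c ^ n ≠ 0 := pow_ne_zero n hc
  simp only [hg, Finset.prod_mul_distrib, Finset.prod_const, hcard]
  field_simp

lemma nIncreasingOn.mono {T : Set ℝ} (hf : nIncreasingOn f S n) (hTS : T ⊆ S) :
    nIncreasingOn f T n :=
  fun x hx hxT => hf x hx fun j => hTS (hxT j)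

lemma nIncreasingOn.congr (hf : nIncreasingOn f S n) (hfg : EqOn f g S) : nIncreasingOn g S n := by
  intro x hx hxS
  simpa only [divDiff, hfg (hxS _)] using hf x hx hxS

lemma nIncreasingOn.comp_lineMap (hf : nIncreasingOn f S n) {x y : ℝ} (hxy : x < y) :
    nIncreasingOn (fun t => f (AffineMap.lineMap x y t)) (AffineMap.lineMap x y ⁻¹' S) n := by
  intro z hz hzS
  rw [divDiff_comp_of_sub_eq_mul (c := y - x) (fun s t => ?_) (sub_pos.2 hxy).ne']
  · exact mul_nonneg (pow_nonneg (sub_pos.2 hxy).le n)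
      (hf _ ((AffineMap.lineMap_injective ℝ hxy.ne).comp hz) hzS)
  · simp only [AffineMap.lineMap_apply_ring]
    ring

theorem exists_iteratedDeriv_eq_zero (hg : ContDiff ℝ n g) {x : Fin (n + 1) → ℝ}
    (hx : StrictMono x) (hgx : ∀ j, g (x j) = 0) :
    ∃ ξ ∈ Icc (x 0) (x (Fin.last n)), iteratedDeriv n g ξ = 0 := by
  induction n generalizing g with
  | zero => exact ⟨x 0, ⟨le_rfl, le_rfl⟩, by rw [iteratedDeriv_zero, hgx]⟩
  | succ n ih =>
    have hrolle (j : Fin (n + 1)) : ∃ c ∈ Ioo (x j.castSucc) (x j.succ), deriv g c = 0 :=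
      exists_deriv_eq_zero (hx j.castSucc_lt_succ) hg.continuous.continuousOn
        ((hgx _).trans (hgx _).symm)
    choose c hc hgc using hrolle
    have hcmono : StrictMono c := Fin.strictMono_iff_lt_succ.2 fun j =>
      (hc j.castSucc).2.trans (hc j.succ).1
    have hg' : ContDiff ℝ n (deriv g) := (contDiff_succ_iff_deriv.1 (by exact_mod_cast hg)).2.2
    obtain ⟨ξ, hξ, hgξ⟩ := ih hg' hcmono hgc
    exact ⟨ξ, ⟨(hc 0).1.le.trans hξ.1, hξ.2.trans (hc (Fin.last n)).2.le⟩,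
      by rw [iteratedDeriv_succ', hgξ]⟩

lemma iteratedDeriv_polynomial_eval (P : Polynomial ℝ) (k : ℕ) :
    iteratedDeriv k (fun t => P.eval t) = fun t => (Polynomial.derivative^[k] P).eval t := by
  rw [iteratedDeriv_eq_iterate]
  have hsemi : Semiconj (fun (Q : Polynomial ℝ) (t : ℝ) => Q.eval t) Polynomial.derivative deriv :=
    fun Q => funext fun t => Q.deriv.symm
  exact (hsemi.iterate_right k P).symm

lemma iterate_derivative_interpolate_eq_divDiff {x : Fin (n + 1) → ℝ} (hx : Injective x) :
    Polynomial.derivative^[n] (Lagrange.interpolate Finset.univ x fun j => f (x j)) =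
      Polynomial.C (n ! * divDiff f n x) := by
  rw [Lagrange.iterate_derivative_interpolate _ hx.injOn (by simp)]
  simp [divDiff]

theorem exists_iteratedDeriv_eq_factorial_mul_divDiff (hf : ContDiff ℝ n f)
    {x : Fin (n + 1) → ℝ} (hx : StrictMono x) :
    ∃ ξ ∈ Icc (x 0) (x (Fin.last n)), iteratedDeriv n f ξ = n ! * divDiff f n x := by
  set P := Lagrange.interpolate Finset.univ x fun j => f (x j) with hP
  have hPdiff : ContDiff ℝ n fun t => P.eval t := P.contDiff_aeval n
  obtain ⟨ξ, hξ, hzero⟩ := exists_iteratedDeriv_eq_zero (hf.sub hPdiff) hx fun j => by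
    rw [hP, Lagrange.eval_interpolate_at_node _ hx.injective.injOn (Finset.mem_univ j), sub_self]
  have hPderiv : iteratedDeriv n (fun t => P.eval t) ξ = n ! * divDiff f n x := by
    simp only [iteratedDeriv_polynomial_eval, hP,
      iterate_derivative_interpolate_eq_divDiff hx.injective, Polynomial.eval_C]
  have hsub := iteratedDeriv_sub (x := ξ) hf.contDiffAt hPdiff.contDiffAt
  exact ⟨ξ, hξ, (sub_eq_zero.1 (hsub.symm.trans hzero)).trans hPderiv⟩

lemma nIncreasingOn.iteratedDeriv_nonneg (hfS : nIncreasingOn f S n) (hS : IsOpen S)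
    (hf : ContDiff ℝ n f) {z : ℝ} (hz : z ∈ S) : 0 ≤ iteratedDeriv n f z := by
  by_contra! hneg
  have hopen : IsOpen (S ∩ {u | iteratedDeriv n f u < 0}) :=
    hS.inter (isOpen_lt (hf.continuous_iteratedDeriv n le_rfl) continuous_const)
  obtain ⟨ε, hε, hball⟩ := Metric.isOpen_iff.1 hopen z ⟨hz, hneg⟩
  let x (j : Fin (n + 1)) : ℝ := z + ε * (j / (n + 1))
  have hx : StrictMono x := fun i j hij => by
    have : (i : ℝ) < j := by exact_mod_cast hij
    simp only [x]
    gcongr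
  have hxball (j : Fin (n + 1)) : x j ∈ ball z ε := by
    have hj : (j : ℝ) / (n + 1) < 1 := by
      rw [div_lt_one (by positivity)]
      exact_mod_cast j.is_lt
    rw [mem_ball, Real.dist_eq, add_sub_cancel_left, abs_of_nonneg (by positivity)]
    exact mul_lt_of_lt_one_right hε hj
  obtain ⟨ξ, hξ, hξx⟩ := exists_iteratedDeriv_eq_factorial_mul_divDiff hf hx
  have hξneg : iteratedDeriv n f ξ < 0 :=
    (hball ((convex_ball z ε).ordConnected.out (hxball 0) (hxball (Fin.last n)) hξ)).2
  have hdiv : 0 ≤ divDiff f n x := hfS x hx.injective fun j => (hball (hxball j)).1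
  exact hξneg.not_ge (hξx ▸ by positivity)

end DividedDifferences

section Mollification

variable {F : ℝ → ℝ} (φ : ContDiffBump (0 : ℝ))

/-- The mollification of `F` by the normalized bump function `φ`, used to replace a continuous
`n`-increasing function by a smooth one. -/
noncomputable def mollify (F : ℝ → ℝ) : ℝ → ℝ :=
  φ.normed volume ⋆[ContinuousLinearMap.lsmul ℝ ℝ, volume] F

lemma mollify_apply (z : ℝ) : mollify φ F z = ∫ t, φ.normed volume t * F (z - t) := rfl

lemma mollify_const_mul (c : ℝ) : mollify φ (fun u => c * F u) = fun u => c * mollify φ F u := by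
  ext z
  simp only [mollify_apply, ← integral_const_mul, mul_left_comm c]

lemma contDiff_mollify (hF : LocallyIntegrable F) : ContDiff ℝ ∞ (mollify φ F) :=
  φ.hasCompactSupport_normed.contDiff_convolution_left _ φ.contDiff_normed hF

lemma integrable_normed_mul_comp_sub (hF : LocallyIntegrable F) (z : ℝ) :
    Integrable fun t => φ.normed volume t * F (z - t) :=
  (φ.hasCompactSupport_normed.convolutionExists_left (ContinuousLinearMap.lsmul ℝ ℝ)
    φ.continuous_normed hF z).integrable

variable {φ} in
lemma abs_mollify_sub_le (hF : LocallyIntegrable F) {z δ : ℝ}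
    (hFz : ∀ s ∈ ball z φ.rOut, |F s - F z| ≤ δ) : |mollify φ F z - F z| ≤ δ :=
  φ.dist_normed_convolution_le hF.aestronglyMeasurable hFz

lemma divDiff_mollify (hF : LocallyIntegrable F) {n : ℕ} (x : Fin (n + 1) → ℝ) :
    divDiff (mollify φ F) n x =
      ∫ t, φ.normed volume t * divDiff F n (fun j => x j - t) := by
  simp only [divDiff, mollify_apply, sub_sub_sub_cancel_right, Finset.mul_sum, ← mul_div_assoc]
  rw [integral_finsetSum _ fun j _ => (integrable_normed_mul_comp_sub φ hF (x j)).div_const _]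
  simp only [integral_div]

variable {φ} in
lemma nIncreasingOn.mollify {J U : Set ℝ} {n : ℕ} (hFJ : nIncreasingOn F J n)
    (hF : LocallyIntegrable F) (hU : ∀ x ∈ U, ball x φ.rOut ⊆ J) :
    nIncreasingOn (mollify φ F) U n := by
  intro x hx hxU
  rw [divDiff_mollify φ hF]
  refine integral_nonneg fun t => ?_
  by_cases ht : t ∈ ball 0 φ.rOut
  · refine mul_nonneg (φ.nonneg_normed t) (hFJ _ (sub_left_injective.comp hx) fun j => ?_)
    exact hU _ (hxU j) (by simpa [Real.dist_eq] using ht)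
  · have hφt : φ.normed volume t = 0 := by rwa [← notMem_support, φ.support_normed_eq]
    simp only [hφt, zero_mul, Pi.zero_apply, le_refl]

theorem exists_contDiff_approx {J K : Set ℝ} (hJ : IsOpen J) (hK : IsCompact K) (hKJ : K ⊆ J)
    (hF : ContinuousOn F J) {δ : ℝ} (hδ : 0 < δ) :
    ∃ (G : ℝ → ℝ) (U : Set ℝ), ContDiff ℝ ∞ G ∧ IsOpen U ∧ K ⊆ U ∧ (∀ t ∈ K, |G t - F t| ≤ δ) ∧
      ∀ (c : ℝ) (k : ℕ), nIncreasingOn (fun u => c * F u) J k →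
        nIncreasingOn (fun u => c * G u) U k := by
  obtain ⟨r, hr, hrJ⟩ := hK.exists_cthickening_subset_open hJ hKJ
  set K' := cthickening r K
  have hK'c : IsCompact K' := hK.cthickening
  obtain ⟨r₀, hr₀, hF₀⟩ := Metric.uniformContinuousOn_iff.1
    (hK'c.uniformContinuousOn_of_continuous (hF.mono hrJ)) δ hδ
  -- The convolution needs a function that is locally integrable on all of `ℝ`.
  have hFK' : EqOn (K'.indicator F) F K' := eqOn_indicator
  have hFint : LocallyIntegrable (K'.indicator F) :=
    ((integrable_indicator_iff hK'c.measurableSet).2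
      ((hF.mono hrJ).integrableOn_compact hK'c)).locallyIntegrable
  set ρ := min r r₀ / 2 with hρ
  have hρpos : 0 < ρ := by positivity
  have hρr : ρ ≤ r / 2 := by rw [hρ]; gcongr; exact min_le_left _ _
  have hρr₀ : ρ < r₀ := (half_lt_self (by positivity)).trans_le (min_le_right _ _)
  let φ : ContDiffBump (0 : ℝ) := ⟨ρ / 2, ρ, half_pos hρpos, half_lt_self hρpos⟩
  have hball : ∀ x ∈ thickening (r / 2) K, ball x φ.rOut ⊆ K' := fun x hx =>
    calc ball x ρ
      _ ⊆ thickening (r / 2) (thickening (r / 2) K) :=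
        (ball_subset_ball hρr).trans (ball_subset_thickening hx _)
      _ ⊆ thickening r K := by
        simpa only [add_halves] using thickening_thickening_subset (r / 2) (r / 2) K
      _ ⊆ K' := thickening_subset_cthickening r K
  refine ⟨mollify φ (K'.indicator F), thickening (r / 2) K, contDiff_mollify φ hFint,
    isOpen_thickening, self_subset_thickening (half_pos hr) K, fun t ht => ?_, fun c k hck => ?_⟩
  · have htK' : t ∈ K' := self_subset_cthickening K ht
    rw [← hFK' htK']
    refine abs_mollify_sub_le hFint fun s hs => ?_
    have hsK' : s ∈ K' := hball t (self_subset_thickening (half_pos hr) K ht) hs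
    rw [hFK' hsK', hFK' htK']
    exact (hF₀ s hsK' t htK' (hs.trans hρr₀)).le
  · rw [← mollify_const_mul]
    have hck' : nIncreasingOn (fun u => c * K'.indicator F u) K' k :=
      (hck.mono hrJ).congr fun u hu => by simp only [hFK' hu]
    exact hck'.mollify (hFint.smul c) hball

end Mollification

theorem sInt_nonneg_of_nIncreasingOn {μ : SignedMeasure ℝ} {J : Set ℝ} (hJ : IsOpen J)
    (hIccJ : Icc 0 1 ⊆ J) {lam : ℝ} (hlam : lam ∈ Icc (0 : ℝ) 1) {F : ℝ → ℝ}
    (hF : ContinuousOn F J) {m : ℕ}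
    (hlow : ∀ k < m + 1, nIncreasingOn (fun u => muK μ k lam * F u) J k)
    (htop : nIncreasingOn F J (m + 1)) (hminus : ∀ τ ∈ Ico 0 lam, muMinus μ m τ ≤ 0)
    (hplus : ∀ τ ∈ Ioc lam 1, 0 ≤ muPlus μ m τ) : 0 ≤ sInt μ (Icc 0 1) F := by
  refine sInt_nonneg_of_forall_approx ((hF.mono hIccJ).integrableOn_compact isCompact_Icc)
    fun δ hδ => ?_
  obtain ⟨G, U, hG, hU, hIccU, hGF, hmono⟩ := exists_contDiff_approx hJ isCompact_Icc hIccJ hF hδ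
  have hGn (n : ℕ) : ContDiff ℝ n G := hG.of_le (by exact_mod_cast le_top)
  have hGtop : nIncreasingOn G U (m + 1) := by
    simpa only [one_mul] using hmono 1 (m + 1) (by simpa only [one_mul] using htop)
  refine ⟨G, hG.continuous.continuousOn.integrableOn_compact isCompact_Icc, hGF,
    sInt_nonneg_of_iteratedDeriv hlam (hGn _) (fun k hk => ?_)
      (fun t ht => hGtop.iteratedDeriv_nonneg hU (hGn _) (hIccU ht)) hminus hplus⟩
  rw [← iteratedDeriv_const_mul_field]
  exact (hmono _ k (hlow k hk)).iteratedDeriv_nonneg hU (contDiff_const.mul (hGn k)) (hIccU hlam)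

theorem stmt3 (I : Set ℝ) (hIo : IsOpen I) (hIc : I.OrdConnected) (hIne : I.Nonempty)
    (n : ℕ) (hn : 1 ≤ n) (μ : MeasureTheory.SignedMeasure ℝ)
    (lam : ℝ) (hlam : lam ∈ Icc (0:ℝ) 1)
    (f : ℝ → ℝ) (hf : ContinuousOn f I)
    (ha : ∀ k < n, nIncreasingOn (fun u => muK μ k lam * f u) I k)
    (hb : (nIncreasingOn f I n ∧ (∀ τ ∈ Ico (0:ℝ) lam, muMinus μ (n - 1) τ ≤ 0) ∧
            (∀ τ ∈ Ioc lam (1:ℝ), 0 ≤ muPlus μ (n - 1) τ)) ∨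
          (nDecreasingOn f I n ∧ (∀ τ ∈ Ico (0:ℝ) lam, 0 ≤ muMinus μ (n - 1) τ) ∧
            (∀ τ ∈ Ioc lam (1:ℝ), muPlus μ (n - 1) τ ≤ 0))) :
    ∀ x ∈ I, ∀ y ∈ I, x < y →
      0 ≤ sInt μ (Icc 0 1) (fun t => f ((1 - t) * x + t * y)) := by
  intro x hx y hy hxy
  obtain ⟨m, rfl⟩ := Nat.exists_eq_succ_of_ne_zero (Nat.one_le_iff_ne_zero.1 hn)
  set L : ℝ →ᵃ[ℝ] ℝ := AffineMap.lineMap x y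
  have hL : ∀ t, (1 - t) * x + t * y = L t := fun t => (AffineMap.lineMap_apply_ring x y t).symm
  have hLc : Continuous L := AffineMap.lineMap_continuous
  have hJ : Icc 0 1 ⊆ L ⁻¹' I := fun t ht => hIc.convex.lineMap_mem hx hy ht
  have hfL : ContinuousOn (fun t => f (L t)) (L ⁻¹' I) := hf.comp hLc.continuousOn fun _ ht => ht
  simp only [hL]
  rcases hb with ⟨hinc, hminus, hplus⟩ | ⟨hdec, hminus, hplus⟩
  · exact sInt_nonneg_of_nIncreasingOn (hIo.preimage hLc) hJ hlam hfL
      (fun k hk => (ha k hk).comp_lineMap hxy) (hinc.comp_lineMap hxy) hminus hplus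
  · have hneg : 0 ≤ sInt (-μ) (Icc 0 1) fun t => -f (L t) :=
      sInt_nonneg_of_nIncreasingOn (hIo.preimage hLc) hJ hlam hfL.neg
        (fun k hk => by simpa [muK, sInt_neg_measure] using (ha k hk).comp_lineMap hxy)
        (nIncreasingOn.comp_lineMap hdec hxy)
        (fun τ hτ => by simpa [muMinus, sInt_neg_measure] using hminus τ hτ)
        (fun τ hτ => by simpa [muPlus, sInt_neg_measure] using hplus τ hτ)
    simpa only [sInt_neg_measure, sInt_neg, neg_neg] using hneg
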